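/- arXiv:2010.08194 — 3 statements merged into one kernel-verified Lean document; each statement's English description precedes it below -/
import Mathlib

section
/- Let 0 < s < 1 and define I_s := (1/π²)·∫_{B(0,1)}∫_{B(0,1)} |x - x'|^{-2(1-s)} dx dx' over the unit ball in ℝ². Then 1/6 ≤ s·I_s ≤ 1. -/
open Real MeasureTheory

/-!
Fix the dimension `d` and an exponent `-d < p ≤ 0`, and compare the potential of the unit ball at
a point `x` of it with potentials of balls centred at `x`, which integrate explicitly in polar
coordinates. Among all sets of a given measure, the ball centred at `x` has the largest potential
at `x`, because the kernel decreases with the distance; this bounds the energy from above. The ball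
of radius `1 - ‖x‖` around `x` lies in the unit ball, so the potential at `x` is at least a multiple
of `(1 - ‖x‖) ^ (d + p) ≥ (1 - ‖x‖) ^ d`, whose integral is a Beta integral.
-/

open Set Metric Module Bornology

section Prerequisites

lemma setIntegral_le_setIntegral_of_measure_eq {X : Type*} [MeasurableSpace X] {μ : Measure X}
    {f : X → ℝ} {A B : Set X} {c : ℝ} (hA : MeasurableSet A) (hB : MeasurableSet B)
    (hAB : μ A = μ B) (hμA : μ A ≠ ⊤) (hfA : IntegrableOn f A μ) (hfB : IntegrableOn f B μ)
    (hle : ∀ x ∈ A \ B, f x ≤ c) (hge : ∀ x ∈ B \ A, c ≤ f x) :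
    ∫ x in A, f x ∂μ ≤ ∫ x in B, f x ∂μ := by
  have hμAB : μ (A \ B) ≠ ⊤ := measure_ne_top_of_subset sdiff_subset hμA
  have hsymm : μ (A \ B) = μ (B \ A) :=
    measure_sdiff_symm hA.nullMeasurableSet hB.nullMeasurableSet hAB
      (measure_ne_top_of_subset inter_subset_left hμA)
  have hconst : ∫ _ in A \ B, c ∂μ = ∫ _ in B \ A, c ∂μ := by
    simp only [setIntegral_const, measureReal_def, hsymm]
  have hleft : ∫ x in A \ B, f x ∂μ ≤ ∫ _ in A \ B, c ∂μ :=
    setIntegral_mono_on (hfA.mono_set sdiff_subset) (integrableOn_const hμAB) (hA.diff hB) hle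
  have hright : ∫ _ in B \ A, c ∂μ ≤ ∫ x in B \ A, f x ∂μ :=
    setIntegral_mono_on (integrableOn_const (hsymm ▸ hμAB)) (hfB.mono_set sdiff_subset)
      (hB.diff hA) hge
  calc ∫ x in A, f x ∂μ
      = ∫ x in A ∩ B, f x ∂μ + ∫ x in A \ B, f x ∂μ := (integral_inter_add_sdiff hB hfA).symm
    _ ≤ ∫ x in A ∩ B, f x ∂μ + ∫ _ in A \ B, c ∂μ := by gcongr
    _ = ∫ x in B ∩ A, f x ∂μ + ∫ _ in B \ A, c ∂μ := by rw [inter_comm, hconst]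
    _ ≤ ∫ x in B ∩ A, f x ∂μ + ∫ x in B \ A, f x ∂μ := by gcongr
    _ = ∫ x in B, f x ∂μ := integral_inter_add_sdiff hA hfB

open Nat in
lemma integral_pow_mul_one_sub_pow (m n : ℕ) :
    ∫ x in (0 : ℝ)..1, x ^ m * (1 - x) ^ n = m ! * n ! / (m + n + 1)! := by
  have hbeta : Complex.betaIntegral (m + 1) (n + 1) = (m ! * n ! / (m + n + 1)! : ℂ) := by
    have hsum : (m + 1 + (n + 1) : ℂ) = (m + n + 1 : ℕ) + 1 := by push_cast; ring
    have hre (k : ℕ) : 0 < (k + 1 : ℂ).re := by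
      simpa using k.cast_add_one_pos (α := ℝ)
    rw [Complex.betaIntegral_eq_Gamma_mul_div _ _ (hre m) (hre n), hsum]
    simp only [Complex.Gamma_nat_eq_factorial]
  rw [Complex.betaIntegral] at hbeta
  simp only [add_sub_cancel_right, Complex.cpow_natCast] at hbeta
  rw [← Complex.ofReal_inj, ← intervalIntegral.integral_ofReal]
  push_cast
  exact hbeta

end Prerequisites

section Radial

variable {E : Type*} [NormedAddCommGroup E] [NormedSpace ℝ E] [FiniteDimensional ℝ E]
  [Nontrivial E] [MeasurableSpace E] [BorelSpace E] (μ : Measure E) [μ.IsAddHaarMeasure]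

lemma setIntegral_ball_fun_norm {F : Type*} [NormedAddCommGroup F] [NormedSpace ℝ F]
    (f : ℝ → F) (r : ℝ) :
    ∫ x in ball (0 : E) r, f ‖x‖ ∂μ =
      finrank ℝ E • μ.real (ball (0 : E) 1) • ∫ t in Ioo 0 r, t ^ (finrank ℝ E - 1) • f t := by
  have hball : (ball (0 : E) r).indicator (fun x ↦ f ‖x‖) = fun x ↦ (Iio r).indicator f ‖x‖ := by
    ext x
    simp only [indicator, mem_ball_zero_iff, mem_Iio]
  have hsmul : (fun t : ℝ ↦ t ^ (finrank ℝ E - 1) • (Iio r).indicator f t) =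
      (Iio r).indicator fun t ↦ t ^ (finrank ℝ E - 1) • f t := by
    ext t
    rw [indicator_smul_apply]
  rw [← integral_indicator measurableSet_ball, hball, integral_fun_norm_addHaar, hsmul,
    setIntegral_indicator measurableSet_Iio, Ioi_inter_Iio]

lemma setIntegral_ball_norm_rpow {p r : ℝ} (hp : 0 < finrank ℝ E + p) (hr : 0 ≤ r) :
    ∫ x in ball (0 : E) r, ‖x‖ ^ p ∂μ =
      finrank ℝ E / (finrank ℝ E + p) * μ.real (ball (0 : E) 1) * r ^ (finrank ℝ E + p) := by
  have hpow : EqOn (fun t : ℝ ↦ t ^ (finrank ℝ E - 1) • t ^ p)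
      (fun t ↦ t ^ (finrank ℝ E + p - 1)) (Ioo 0 r) := by
    intro t ht
    beta_reduce
    rw [smul_eq_mul, ← rpow_natCast, ← rpow_add ht.1, Nat.cast_pred finrank_pos]
    ring_nf
  rw [setIntegral_ball_fun_norm μ (fun t ↦ t ^ p), setIntegral_congr_fun measurableSet_Ioo hpow,
    ← integral_Ioc_eq_integral_Ioo, ← intervalIntegral.integral_of_le hr,
    integral_rpow (.inl (by linarith)), sub_add_cancel, zero_rpow hp.ne', sub_zero,
    nsmul_eq_mul, smul_eq_mul]
  ring

lemma setIntegral_unitBall_one_sub_norm_pow (n : ℕ) :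
    ∫ x in ball (0 : E) 1, (1 - ‖x‖) ^ n ∂μ =
      μ.real (ball (0 : E) 1) / (finrank ℝ E + n).choose (finrank ℝ E) := by
  obtain ⟨k, hk⟩ : ∃ k, finrank ℝ E = k + 1 := Nat.exists_eq_succ_of_ne_zero finrank_pos.ne'
  rw [setIntegral_ball_fun_norm μ (fun t ↦ (1 - t) ^ n), ← integral_Ioc_eq_integral_Ioo,
    ← intervalIntegral.integral_of_le zero_le_one]
  simp only [smul_eq_mul, nsmul_eq_mul, hk, Nat.add_sub_cancel, integral_pow_mul_one_sub_pow]
  rw [Nat.cast_add_choose ℝ, Nat.factorial_succ k, add_right_comm]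
  push_cast
  field_simp

end Radial

section RieszPotential

variable {E : Type*} [NormedAddCommGroup E] [MeasurableSpace E]

/-- The Riesz potential at `x` of the restriction of `μ` to `A`, with kernel `‖x - y‖ ^ p`. In
dimension `d`, the Riesz potential of order `α` is the case `p = α - d`, up to the normalizing
constant, which is omitted. -/
noncomputable def rieszPotential (μ : Measure E) (A : Set E) (p : ℝ) (x : E) : ℝ :=
  ∫ y in A, ‖x - y‖ ^ p ∂μ

/-- The Riesz energy of the restriction of `μ` to `A`, with kernel `‖x - y‖ ^ p`. -/
noncomputable def rieszEnergy (μ : Measure E) (A : Set E) (p : ℝ) : ℝ :=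
  ∫ x in A, rieszPotential μ A p x ∂μ

lemma rieszPotential_nonneg (μ : Measure E) (A : Set E) (p : ℝ) (x : E) :
    0 ≤ rieszPotential μ A p x :=
  integral_nonneg fun _ ↦ by positivity

lemma stronglyMeasurable_rieszPotential [SecondCountableTopology E] [BorelSpace E] (μ : Measure E)
    [SFinite μ] (A : Set E) (p : ℝ) :
    StronglyMeasurable (rieszPotential μ A p) := by
  have hkernel : Measurable fun z : E × E ↦ ‖z.1 - z.2‖ ^ p := by fun_prop
  exact hkernel.stronglyMeasurable.integral_prod_right

variable [NormedSpace ℝ E] [FiniteDimensional ℝ E] [Nontrivial E] [BorelSpace E]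
  (μ : Measure E) [μ.IsAddHaarMeasure] {A : Set E} {p r : ℝ} {x : E}

lemma integrableOn_norm_sub_rpow (hp : 0 < finrank ℝ E + p) (hA : IsBounded A) (x : E) :
    IntegrableOn (fun y ↦ ‖x - y‖ ^ p) A μ := by
  have hloc : LocallyIntegrable (fun y : E ↦ ‖y‖ ^ p) μ := by
    refine locallyIntegrable_of_norm_le_rpow (C := 1) (α := -p) finrank_pos (by linarith)
      (.of_forall fun y ↦ ?_) (measurable_norm.pow_const p).aestronglyMeasurable
    rw [neg_neg, one_mul, norm_of_nonneg (by positivity)]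
  have himage : IntegrableOn (fun y : E ↦ ‖y‖ ^ p) ((x - ·) '' A) μ := by
    have hbdd : IsBounded ((x - ·) '' A) :=
      (IsometryEquiv.subLeft x).isometry.lipschitz.isBounded_image hA
    exact (hloc.integrableOn_isCompact hbdd.isCompact_closure).mono_set subset_closure
  exact ((μ.measurePreserving_sub_left x).integrableOn_image
    (measurableEmbedding_subLeft x)).1 himage

lemma rieszPotential_ball_self (hp : 0 < finrank ℝ E + p) (hr : 0 ≤ r) (x : E) :
    rieszPotential μ (ball x r) p x =
      finrank ℝ E / (finrank ℝ E + p) * μ.real (ball (0 : E) 1) * r ^ (finrank ℝ E + p) := by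
  have hball : ball x r = (x - ·) ⁻¹' ball 0 r := by
    ext y
    simp [dist_eq_norm, norm_sub_rev]
  rw [rieszPotential, hball, (μ.measurePreserving_sub_left x).setIntegral_preimage_emb
    (measurableEmbedding_subLeft x) (fun y ↦ ‖y‖ ^ p), setIntegral_ball_norm_rpow μ hp hr]

lemma rieszPotential_mono (hp : 0 < finrank ℝ E + p) {B : Set E} (hB : IsBounded B) (hAB : A ⊆ B)
    (x : E) : rieszPotential μ A p x ≤ rieszPotential μ B p x :=
  setIntegral_mono_set (integrableOn_norm_sub_rpow μ hp hB x) (.of_forall fun _ ↦ by positivity)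
    hAB.eventuallyLE

lemma rieszPotential_le_rieszPotential_ball (hp : 0 < finrank ℝ E + p) (hp' : p ≤ 0)
    (hA : MeasurableSet A) (hbdd : IsBounded A) (hx : x ∈ A) (hr : 0 < r)
    (hμ : μ A = μ (ball x r)) :
    rieszPotential μ A p x ≤ rieszPotential μ (ball x r) p x := by
  refine setIntegral_le_setIntegral_of_measure_eq (c := r ^ p) hA measurableSet_ball hμ
    hbdd.measure_lt_top.ne (integrableOn_norm_sub_rpow μ hp hbdd x)
    (integrableOn_norm_sub_rpow μ hp isBounded_ball x) ?_ ?_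
  · rintro y ⟨-, hy⟩
    rw [mem_ball', dist_eq_norm, not_lt] at hy
    exact rpow_le_rpow_of_nonpos hr hy hp'
  · rintro y ⟨hy, hyA⟩
    rw [mem_ball', dist_eq_norm] at hy
    -- For `p < 0` the kernel has the junk value `0 ^ p = 0` at `y = x`.
    have hxy : x ≠ y := fun h ↦ hyA (h ▸ hx)
    exact rpow_le_rpow_of_nonpos (norm_sub_pos_iff.2 hxy) hy.le hp'

lemma rieszPotential_unitBall_le (hp : 0 < finrank ℝ E + p) (hp' : p ≤ 0)
    (hx : x ∈ ball (0 : E) 1) :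
    rieszPotential μ (ball 0 1) p x ≤
      finrank ℝ E / (finrank ℝ E + p) * μ.real (ball (0 : E) 1) := by
  have hmax := rieszPotential_le_rieszPotential_ball μ hp hp' measurableSet_ball isBounded_ball hx
    one_pos (μ.addHaar_ball_center x 1).symm
  rwa [rieszPotential_ball_self μ hp zero_le_one, one_rpow, mul_one] at hmax

lemma le_rieszPotential_unitBall (hp : 0 < finrank ℝ E + p) (hp' : p ≤ 0)
    (hx : x ∈ ball (0 : E) 1) :
    finrank ℝ E / (finrank ℝ E + p) * μ.real (ball (0 : E) 1) * (1 - ‖x‖) ^ finrank ℝ E ≤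
      rieszPotential μ (ball 0 1) p x := by
  have hx1 : 0 < 1 - ‖x‖ := sub_pos.2 (mem_ball_zero_iff.1 hx)
  have hsubset : ball x (1 - ‖x‖) ⊆ ball 0 1 :=
    ball_subset_ball' (by rw [dist_zero_right, sub_add_cancel])
  have hpow : (1 - ‖x‖) ^ finrank ℝ E ≤ (1 - ‖x‖) ^ (finrank ℝ E + p) := by
    rw [← rpow_natCast]
    exact rpow_le_rpow_of_exponent_ge hx1 (by linarith [norm_nonneg x]) (by linarith)
  calc _ ≤ finrank ℝ E / (finrank ℝ E + p) * μ.real (ball (0 : E) 1) *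
        (1 - ‖x‖) ^ (finrank ℝ E + p) := by gcongr
    _ = rieszPotential μ (ball x (1 - ‖x‖)) p x := (rieszPotential_ball_self μ hp hx1.le x).symm
    _ ≤ rieszPotential μ (ball 0 1) p x := rieszPotential_mono μ hp isBounded_ball hsubset x

lemma integrableOn_rieszPotential_unitBall (hp : 0 < finrank ℝ E + p) (hp' : p ≤ 0) :
    IntegrableOn (rieszPotential μ (ball 0 1) p) (ball 0 1) μ := by
  refine IntegrableOn.of_bound measure_ball_lt_top
    (stronglyMeasurable_rieszPotential μ _ p).aestronglyMeasurable
    (finrank ℝ E / (finrank ℝ E + p) * μ.real (ball (0 : E) 1)) ?_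
  refine ae_restrict_of_forall_mem measurableSet_ball fun x hx ↦ ?_
  rw [norm_of_nonneg (rieszPotential_nonneg μ _ p x)]
  exact rieszPotential_unitBall_le μ hp hp' hx

lemma rieszEnergy_unitBall_le (hp : 0 < finrank ℝ E + p) (hp' : p ≤ 0) :
    rieszEnergy μ (ball 0 1) p ≤
      finrank ℝ E / (finrank ℝ E + p) * μ.real (ball (0 : E) 1) ^ 2 := by
  calc rieszEnergy μ (ball 0 1) p
      ≤ ∫ _ in ball (0 : E) 1, finrank ℝ E / (finrank ℝ E + p) * μ.real (ball (0 : E) 1) ∂μ :=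
        setIntegral_mono_on (integrableOn_rieszPotential_unitBall μ hp hp')
          (integrableOn_const measure_ball_lt_top.ne) measurableSet_ball
          fun _ ↦ rieszPotential_unitBall_le μ hp hp'
    _ = finrank ℝ E / (finrank ℝ E + p) * μ.real (ball (0 : E) 1) ^ 2 := by
        rw [setIntegral_const, smul_eq_mul]
        ring

lemma le_rieszEnergy_unitBall (hp : 0 < finrank ℝ E + p) (hp' : p ≤ 0) :
    finrank ℝ E / (finrank ℝ E + p) * μ.real (ball (0 : E) 1) ^ 2 / (finrank ℝ E).centralBinom ≤
      rieszEnergy μ (ball 0 1) p := by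
  have hint : IntegrableOn (fun x : E ↦ finrank ℝ E / (finrank ℝ E + p) *
      μ.real (ball (0 : E) 1) * (1 - ‖x‖) ^ finrank ℝ E) (closedBall 0 1) μ :=
    (by fun_prop : Continuous _).continuousOn.integrableOn_compact (isCompact_closedBall 0 1)
  calc _ = ∫ x in ball (0 : E) 1, finrank ℝ E / (finrank ℝ E + p) * μ.real (ball (0 : E) 1) *
        (1 - ‖x‖) ^ finrank ℝ E ∂μ := by
        rw [integral_const_mul, setIntegral_unitBall_one_sub_norm_pow, ← two_mul,
          ← Nat.centralBinom_eq_two_mul_choose]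
        ring
    _ ≤ rieszEnergy μ (ball 0 1) p :=
        setIntegral_mono_on
          (hint.mono_set ball_subset_closedBall)
          (integrableOn_rieszPotential_unitBall μ hp hp') measurableSet_ball
          fun _ ↦ le_rieszPotential_unitBall μ hp hp'

theorem Is_bounds_general {s : ℝ} (hs0 : 0 < s) (hs1 : s ≤ 1) :
    1 / (finrank ℝ E).centralBinom ≤ s * (1 / μ.real (ball (0 : E) 1) ^ 2 *
        ∫ x in ball (0 : E) 1, ∫ y in ball (0 : E) 1,
          ‖x - y‖ ^ (-(finrank ℝ E * (1 - s))) ∂μ ∂μ) ∧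
      s * (1 / μ.real (ball (0 : E) 1) ^ 2 *
        ∫ x in ball (0 : E) 1, ∫ y in ball (0 : E) 1,
          ‖x - y‖ ^ (-(finrank ℝ E * (1 - s))) ∂μ ∂μ) ≤ 1 := by
  have hd : (0 : ℝ) < finrank ℝ E := mod_cast finrank_pos
  have hω : 0 < μ.real (ball (0 : E) 1) :=
    ENNReal.toReal_pos (measure_ball_pos μ 0 one_pos).ne' measure_ball_lt_top.ne
  have hp : 0 < finrank ℝ E + -(finrank ℝ E * (1 - s)) := by linarith [mul_pos hd hs0]
  have hp' : -(finrank ℝ E * (1 - s)) ≤ 0 := neg_nonpos.2 (mul_nonneg hd.le (sub_nonneg.2 hs1))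
  have hratio : finrank ℝ E / (finrank ℝ E + -(finrank ℝ E * (1 - s))) = 1 / s := by
    rw [div_eq_div_iff hp.ne' hs0.ne']
    ring
  have hlower := le_rieszEnergy_unitBall μ hp hp'
  have hupper := rieszEnergy_unitBall_le μ hp hp'
  simp only [hratio, rieszEnergy, rieszPotential] at hlower hupper
  constructor
  · calc (1 : ℝ) / (finrank ℝ E).centralBinom
        = s * (1 / μ.real (ball (0 : E) 1) ^ 2 * (1 / s * μ.real (ball (0 : E) 1) ^ 2 /
            (finrank ℝ E).centralBinom)) := by field_simp
      _ ≤ _ := by gcongr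
  · calc _ ≤ s * (1 / μ.real (ball (0 : E) 1) ^ 2 *
            (1 / s * μ.real (ball (0 : E) 1) ^ 2)) := by gcongr
      _ = 1 := by field_simp

end RieszPotential

theorem Is_bounds (s : ℝ) (hs0 : 0 < s) (hs1 : s < 1)
    (Is : ℝ)
    (hIs : Is = (1 / π ^ 2) *
      ∫ x in Metric.ball (0 : EuclideanSpace ℝ (Fin 2)) 1,
        ∫ y in Metric.ball (0 : EuclideanSpace ℝ (Fin 2)) 1,
          ‖x - y‖ ^ (-(2 * (1 - s)))) :
    1 / 6 ≤ s * Is ∧ s * Is ≤ 1 := by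
  have hω : volume.real (ball (0 : EuclideanSpace ℝ (Fin 2)) 1) = π := by
    simp [measureReal_def, pi_nonneg]
  simpa [hIs, hω, Nat.centralBinom, Nat.choose] using
    Is_bounds_general (volume : Measure (EuclideanSpace ℝ (Fin 2))) hs0 hs1.le
end

section
/- Let f be even, nonnegative, non-increasing on [0,∞), and integrable on ℝ, and let g : ℝ → [0,1] be even and non-increasing on [0,∞) with ∫g < ∞. Then the convolution f∗g is even and non-increasing on [0,∞). -/
open Real MeasureTheory

/-!
Fix points `a`, `b` with `‖a‖ ≤ ‖b‖` and let `σ` be the reflection across their perpendicular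
bisector. It preserves volume and exchanges `a` and `b`, so symmetrizing the integrals gives
`2 ((f ∗ g) a - (f ∗ g) b) = ∫ (f (a - y) - f (b - y)) (g y - g (σ y)) dy`.
The origin lies on the side of `a`. Hence on that side `y` is closer than `σ y` to the origin and
both factors are nonnegative, while on the other side both are nonpositive.
-/

section PerpBisector

open AffineSubspace EuclideanGeometry
open scoped RealInnerProductSpace

variable {V P : Type*} [NormedAddCommGroup V] [InnerProductSpace ℝ V] [MetricSpace P]
  [NormedAddTorsor V P]

instance nonempty_perpBisector (a b : P) : Nonempty (perpBisector a b) :=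
  perpBisector_nonempty.to_subtype

instance hasOrthogonalProjection_direction_perpBisector (a b : P) :
    (perpBisector a b).direction.HasOrthogonalProjection := by
  rw [direction_perpBisector]
  infer_instance

theorem reflection_perpBisector_left (a b : P) : reflection (perpBisector a b) a = b := by
  have hdir : a -ᵥ midpoint ℝ a b ∈ (perpBisector a b).directionᗮ := by
    rw [direction_perpBisector, Submodule.orthogonal_orthogonal, left_vsub_midpoint,
      ← neg_vsub_eq_vsub_rev b a, smul_neg]
    exact neg_mem (Submodule.smul_mem _ _ (Submodule.mem_span_singleton_self _))
  calc reflection (perpBisector a b) a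
      = reflection (perpBisector a b) ((a -ᵥ midpoint ℝ a b) +ᵥ midpoint ℝ a b) := by
        rw [vsub_vadd]
    _ = -(a -ᵥ midpoint ℝ a b) +ᵥ midpoint ℝ a b :=
        reflection_orthogonal_vadd (midpoint_mem_perpBisector a b) hdir
    _ = b := by
        rw [left_vsub_midpoint, ← smul_neg, neg_vsub_eq_vsub_rev, ← right_vsub_midpoint, vsub_vadd]

theorem reflection_perpBisector_right (a b : P) : reflection (perpBisector a b) b = a :=
  (reflection (perpBisector a b)).injective <| by
    rw [reflection_reflection, reflection_perpBisector_left]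

theorem dist_reflection_perpBisector_left (a b y : P) :
    dist (reflection (perpBisector a b) y) a = dist y b := by
  rw [← dist_reflection, reflection_perpBisector_left]

theorem dist_reflection_perpBisector_right (a b y : P) :
    dist (reflection (perpBisector a b) y) b = dist y a := by
  rw [← dist_reflection, reflection_perpBisector_right]

-- At `d = 0` the quotient is `0`, consistently with the reflection being the identity.
theorem norm_reflection_orthogonal_singleton_sub_sq (d v w : V) :
    ‖(ℝ ∙ d)ᗮ.reflection v - w‖ ^ 2 = ‖v - w‖ ^ 2 + 4 * (⟪d, v⟫ * ⟪d, w⟫) / ‖d‖ ^ 2 := by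
  have hinner : ⟪(ℝ ∙ d)ᗮ.reflection v, w⟫ = ⟪v, w⟫ - 2 * (⟪d, v⟫ * ⟪d, w⟫) / ‖d‖ ^ 2 := by
    rw [Submodule.reflection_orthogonal_apply, Submodule.reflection_singleton_apply, neg_sub,
      inner_sub_left, ← Nat.cast_smul_eq_nsmul ℝ, real_inner_smul_left, real_inner_smul_left]
    simp only [Nat.cast_ofNat, RCLike.ofReal_real_eq_id, id_eq]
    ring
  rw [norm_sub_sq_real, norm_sub_sq_real, LinearIsometryEquiv.norm_map, hinner]
  ring

theorem dist_le_dist_iff_inner_vsub_midpoint_nonpos {a b y : P} :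
    dist y a ≤ dist y b ↔ ⟪b -ᵥ a, y -ᵥ midpoint ℝ a b⟫ ≤ 0 := by
  have ha : y -ᵥ a = (y -ᵥ midpoint ℝ a b) + (2⁻¹ : ℝ) • (b -ᵥ a) := by
    rw [← vsub_add_vsub_cancel y (midpoint ℝ a b) a, midpoint_vsub_left, invOf_eq_inv]
  have hb : y -ᵥ b = (y -ᵥ midpoint ℝ a b) - (2⁻¹ : ℝ) • (b -ᵥ a) := by
    rw [← vsub_add_vsub_cancel y (midpoint ℝ a b) b, midpoint_vsub_right, invOf_eq_inv,
      ← neg_vsub_eq_vsub_rev b a, smul_neg, sub_eq_add_neg]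
  rw [dist_eq_norm_vsub V, dist_eq_norm_vsub V, ← sq_le_sq₀ (norm_nonneg _) (norm_nonneg _), ha, hb,
    norm_add_sq_real, norm_sub_sq_real, real_inner_smul_right, real_inner_comm]
  constructor <;> intro h <;> linarith

theorem dist_le_dist_reflection_perpBisector {a b y z : P} (hy : dist y a ≤ dist y b)
    (hz : dist z a ≤ dist z b) : dist y z ≤ dist (reflection (perpBisector a b) y) z := by
  rw [dist_le_dist_iff_inner_vsub_midpoint_nonpos] at hy hz
  have hreflection : reflection (perpBisector a b) y -ᵥ midpoint ℝ a b =
      (ℝ ∙ (b -ᵥ a))ᗮ.reflection (y -ᵥ midpoint ℝ a b) := by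
    rw [reflection_apply_of_mem _ _ (midpoint_mem_perpBisector a b), vadd_vsub]
    simp only [direction_perpBisector]
  rw [dist_eq_norm_vsub V, dist_eq_norm_vsub V, ← vsub_sub_vsub_cancel_right y z (midpoint ℝ a b),
    ← vsub_sub_vsub_cancel_right _ z (midpoint ℝ a b), hreflection,
    ← sq_le_sq₀ (norm_nonneg _) (norm_nonneg _), norm_reflection_orthogonal_singleton_sub_sq]
  have := mul_nonneg_of_nonpos_of_nonpos hy hz
  exact le_add_of_nonneg_right (by positivity)

end PerpBisector

section MeasurePreserving

variable {E F : Type*} [NormedAddCommGroup E] [InnerProductSpace ℝ E] [FiniteDimensional ℝ E]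
  [MeasurableSpace E] [BorelSpace E] [NormedAddCommGroup F] [InnerProductSpace ℝ F]
  [FiniteDimensional ℝ F] [MeasurableSpace F] [BorelSpace F]

theorem measurePreserving_affineIsometryEquiv (e : E ≃ᵃⁱ[ℝ] F) : MeasurePreserving e := by
  have hrank : Module.finrank ℝ E = Module.finrank ℝ F :=
    e.linearIsometryEquiv.toLinearEquiv.finrank_eq
  have h := e.toIsometryEquiv.measurePreserving_euclideanHausdorffMeasure (Module.finrank ℝ E)
  rwa [InnerProductSpace.euclideanHausdorffMeasure_eq_volume, hrank,
    InnerProductSpace.euclideanHausdorffMeasure_eq_volume] at h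

theorem integral_comp_affineIsometryEquiv {G : Type*} [NormedAddCommGroup G] [NormedSpace ℝ G]
    (e : E ≃ᵃⁱ[ℝ] F) (h : F → G) : ∫ x, h (e x) = ∫ y, h y :=
  (measurePreserving_affineIsometryEquiv e).integral_comp
    e.toHomeomorph.measurableEmbedding h

end MeasurePreserving

/-- Symmetric decreasing functions: `f x` depends only on `‖x‖` and is non-increasing in it.
Both conditions are encoded at once, since equal norms give inequalities in both directions. -/
def RadiallyAntitone {E α : Type*} [Norm E] [Preorder α] (f : E → α) : Prop :=
  ∀ ⦃x y⦄, ‖x‖ ≤ ‖y‖ → f y ≤ f x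

namespace RadiallyAntitone

theorem eq_of_norm_eq {E α : Type*} [Norm E] [PartialOrder α] {f : E → α}
    (hf : RadiallyAntitone f) {x y : E} (h : ‖x‖ = ‖y‖) : f x = f y :=
  (hf h.ge).antisymm (hf h.le)

theorem le_apply_zero {E α : Type*} [SeminormedAddGroup E] [Preorder α] {f : E → α}
    (hf : RadiallyAntitone f) (x : E) : f x ≤ f 0 :=
  hf (norm_zero.trans_le (norm_nonneg x))

theorem measurable {E α : Type*} [SeminormedAddGroup E] [MeasurableSpace E]
    [OpensMeasurableSpace E] [LinearOrder α] [TopologicalSpace α] [OrderTopology α]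
    [SecondCountableTopology α] [MeasurableSpace α] [BorelSpace α] {f : E → α}
    (hf : RadiallyAntitone f) : Measurable f := by
  refine measurable_of_Ioi fun c => ?_
  have hpreimage : f ⁻¹' Set.Ioi c = norm ⁻¹' (lowerClosure (norm '' (f ⁻¹' Set.Ioi c)) : Set ℝ) :=
    Set.Subset.antisymm (fun x hx => subset_lowerClosure ⟨x, hx, rfl⟩)
      fun y ⟨_, ⟨x, hx, hxr⟩, hy⟩ => lt_of_lt_of_le hx (hf (hy.trans_eq hxr.symm))
  rw [hpreimage]
  exact (lowerClosure _).lower.ordConnected.measurableSet.preimage continuous_norm.measurable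

end RadiallyAntitone

theorem radiallyAntitone_iff_even_and_antitoneOn {α : Type*} [PartialOrder α] {f : ℝ → α} :
    RadiallyAntitone f ↔ Function.Even f ∧ AntitoneOn f (Set.Ici 0) := by
  refine ⟨fun hf => ⟨fun x => hf.eq_of_norm_eq (norm_neg x), fun x hx y hy hxy => hf ?_⟩, ?_⟩
  · rwa [norm_of_nonneg hx, norm_of_nonneg hy]
  · rintro ⟨heven, hanti⟩ x y hxy
    have habs : ∀ z, f |z| = f z := fun z => by
      rcases abs_choice z with hz | hz
      · rw [hz]
      · rw [hz, heven]
    rw [← habs x, ← habs y]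
    exact hanti (abs_nonneg x) (abs_nonneg y) hxy

section Convolution

open EuclideanGeometry AffineSubspace ContinuousLinearMap
open scoped Convolution

theorem RadiallyAntitone.convolutionExists {E : Type*} [NormedAddCommGroup E] [MeasurableSpace E]
    [BorelSpace E] {μ : Measure E} [μ.IsAddLeftInvariant]
    [μ.IsNegInvariant] {f g : E → ℝ} (hg : RadiallyAntitone g) (hf : Integrable f μ)
    (hg_bdd : BddBelow (Set.range g)) : ConvolutionExists f g (mul ℝ ℝ) μ := by
  obtain ⟨c, hc⟩ := hg_bdd
  refine fun x => convolutionExistsAt_iff_integrable_swap.2 <|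
    (hf.comp_sub_left x).mul_bdd (c := max |c| |g 0|) hg.measurable.aestronglyMeasurable <|
      .of_forall fun y => ?_
  exact abs_le_max_abs_abs (hc ⟨y, rfl⟩) (hg.le_apply_zero y)

variable {E : Type*} [NormedAddCommGroup E] [InnerProductSpace ℝ E] {f g : E → ℝ}

theorem sub_mul_sub_reflection_perpBisector_nonneg (hf : RadiallyAntitone f)
    (hg : RadiallyAntitone g) {a b : E} (hab : ‖a‖ ≤ ‖b‖) (y : E) :
    0 ≤ (f (a - y) - f (b - y)) * (g y - g (reflection (perpBisector a b) y)) := by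
  set σ := reflection (perpBisector a b)
  have h_zero : dist 0 a ≤ dist 0 b := by simpa only [dist_zero_left] using hab
  have hf_le : ∀ {p q : E}, dist y p ≤ dist y q → f (q - y) ≤ f (p - y) := fun h =>
    hf (by rwa [← dist_eq_norm', ← dist_eq_norm'])
  have hg_le : ∀ {z : E}, dist z a ≤ dist z b → g (σ z) ≤ g z := fun h =>
    hg (by simpa only [dist_zero_right] using dist_le_dist_reflection_perpBisector h h_zero)
  rcases le_total (dist y a) (dist y b) with h | h
  · exact mul_nonneg (sub_nonneg.2 (hf_le h)) (sub_nonneg.2 (hg_le h))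
  · have hσ : dist (σ y) a ≤ dist (σ y) b := by
      rwa [dist_reflection_perpBisector_left, dist_reflection_perpBisector_right]
    have hgσ : g y ≤ g (σ y) := by simpa only [σ, reflection_reflection] using hg_le hσ
    exact mul_nonneg_of_nonpos_of_nonpos (sub_nonpos.2 (hf_le h)) (sub_nonpos.2 hgσ)

variable [FiniteDimensional ℝ E] [MeasurableSpace E] [BorelSpace E]

theorem two_mul_convolution_sub_convolution (hf : ∀ x y, ‖x‖ = ‖y‖ → f x = f y)
    (hfg : ConvolutionExists f g (mul ℝ ℝ)) (a b : E) :
    2 * ((f ⋆[mul ℝ ℝ] g) a - (f ⋆[mul ℝ ℝ] g) b) =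
      ∫ y, (f (a - y) - f (b - y)) * (g y - g (reflection (perpBisector a b) y)) := by
  set σ := reflection (perpBisector a b)
  have hfa : ∀ y, f (a - σ y) = f (b - y) := fun y => hf _ _ <| by
    rw [← dist_eq_norm', ← dist_eq_norm', dist_reflection_perpBisector_left]
  have hfb : ∀ y, f (b - σ y) = f (a - y) := fun y => hf _ _ <| by
    rw [← dist_eq_norm', ← dist_eq_norm', dist_reflection_perpBisector_right]
  have hfg_int : ∀ x, Integrable fun y => f (x - y) * g y := fun x => (hfg x).integrable_swap
  have hfgσ_int : ∀ x, Integrable fun y => f (x - σ y) * g (σ y) := fun x =>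
    (measurePreserving_affineIsometryEquiv σ).integrable_comp_of_integrable (hfg_int x)
  have hσ : ∀ x, ∫ y, f (x - σ y) * g (σ y) = ∫ y, f (x - y) * g y := fun x =>
    integral_comp_affineIsometryEquiv σ fun y => f (x - y) * g y
  calc 2 * ((f ⋆[mul ℝ ℝ] g) a - (f ⋆[mul ℝ ℝ] g) b)
      = ((∫ y, f (a - y) * g y) - ∫ y, f (b - y) * g y) +
          ((∫ y, f (a - σ y) * g (σ y)) - ∫ y, f (b - σ y) * g (σ y)) := by
        rw [hσ, hσ, convolution_mul_swap, convolution_mul_swap, two_mul]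
    _ = ∫ y, (f (a - y) * g y - f (b - y) * g y) +
          (f (a - σ y) * g (σ y) - f (b - σ y) * g (σ y)) := by
        rw [← integral_sub (hfg_int a) (hfg_int b), ← integral_sub (hfgσ_int a) (hfgσ_int b)]
        exact (integral_add ((hfg_int a).sub (hfg_int b)) ((hfgσ_int a).sub (hfgσ_int b))).symm
    _ = ∫ y, (f (a - y) - f (b - y)) * (g y - g (σ y)) := by
        congr with y
        rw [hfa, hfb]
        ring

theorem RadiallyAntitone.convolution (hf : RadiallyAntitone f) (hg : RadiallyAntitone g)
    (hfg : ConvolutionExists f g (mul ℝ ℝ)) : RadiallyAntitone (f ⋆[mul ℝ ℝ] g) := by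
  intro a b hab
  have hnonneg : 0 ≤ 2 * ((f ⋆[mul ℝ ℝ] g) a - (f ⋆[mul ℝ ℝ] g) b) := by
    rw [two_mul_convolution_sub_convolution (fun _ _ => hf.eq_of_norm_eq) hfg]
    exact integral_nonneg (sub_mul_sub_reflection_perpBisector_nonneg hf hg hab)
  linarith

theorem convolution_symmetric_decreasing_general (hf_int : Integrable f)
    (hf : RadiallyAntitone f) (hg : RadiallyAntitone g) (hg_bdd : BddBelow (Set.range g)) :
    RadiallyAntitone (fun x => ∫ y, f (x - y) * g y) := by
  intro a b hab
  simpa only [convolution_mul_swap] using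
    hf.convolution hg (hg.convolutionExists hf_int hg_bdd) hab

end Convolution

theorem convolution_symmetric_decreasing
    (f : ℝ → ℝ) (hf_int : Integrable f) (hf0 : ∀ x, 0 ≤ f x)
    (hf_even : ∀ x, f (-x) = f x) (hf_anti : AntitoneOn f (Set.Ici 0))
    (g : ℝ → ℝ) (hg0 : ∀ x, 0 ≤ g x) (hg1 : ∀ x, g x ≤ 1)
    (hg_even : ∀ x, g (-x) = g x) (hg_anti : AntitoneOn g (Set.Ici 0))
    (hg_int : Integrable g) :
    (∀ x, (∫ y, f (x - y) * g y) = ∫ y, f (-x - y) * g y) ∧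
      AntitoneOn (fun x => ∫ y, f (x - y) * g y) (Set.Ici 0) := by
  have hfg := convolution_symmetric_decreasing_general hf_int
    (radiallyAntitone_iff_even_and_antitoneOn.2 ⟨hf_even, hf_anti⟩)
    (radiallyAntitone_iff_even_and_antitoneOn.2 ⟨hg_even, hg_anti⟩)
    ⟨0, Set.forall_mem_range.2 hg0⟩
  exact (radiallyAntitone_iff_even_and_antitoneOn.1 hfg).imp_left fun h x => (h x).symm
end

section
/- Let N ≥ 2, s ∈ [0,1], ρ ∈ (0,1), and Φ(ξ) := Σ_{n=0}^{N-1} sin(ξ - 2πn/N)·(1 - ρ·cos(ξ - 2πn/N))^{-(2-s)}. Then there exists a continuous, positive, 2π/N-periodic function F : ℝ → ℝ such that Φ(ξ) = sin(Nξ)·F(ξ) for all ξ ∈ ℝ. -/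
open Real Finset

/-!
The nodes `cos (ξ - 2πn/N)` are the roots of `T_N - cos (Nξ)`, `T_N` being the Chebyshev polynomial,
and the derivative of this polynomial at the `n`-th node is `N sin (Nξ) / sin (ξ - 2πn/N)`. Hence
`∑ sin (ξ - 2πn/N) f (cos (ξ - 2πn/N))` is `2 ^ (1 - N) N sin (Nξ)` times the divided difference of
`f` at these nodes, which by the mean value theorem is a value of `f^(N-1) / (N-1)!` on `[-1, 1]`.
If `f^(N-1)` is positive there, the quotient of the sum by `sin (Nξ)` lies between two positive
constants, and since the zeros of `sin (Nξ)` are simple it extends continuously with the same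
bounds. All derivatives of `f x = (1 - ρ x) ^ (-(2 - s))` are positive as soon as `s < 2`.
-/

open scoped Topology

section LHopitalQuotient

variable {𝕜 : Type*} [NontriviallyNormedField 𝕜] {φ ψ : 𝕜 → 𝕜}

/-- The quotient `φ / ψ`, extended to the zeros of `ψ` by the value `φ' / ψ'` that L'Hôpital's rule
assigns to a simple common zero. -/
noncomputable def lhopitalQuotient (φ ψ : 𝕜 → 𝕜) (x : 𝕜) : 𝕜 :=
  open Classical in if ψ x = 0 then deriv φ x / deriv ψ x else φ x / ψ x

theorem lhopitalQuotient_of_eq_zero {x : 𝕜} (hx : ψ x = 0) :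
    lhopitalQuotient φ ψ x = deriv φ x / deriv ψ x := if_pos hx

theorem lhopitalQuotient_of_ne_zero {x : 𝕜} (hx : ψ x ≠ 0) :
    lhopitalQuotient φ ψ x = φ x / ψ x := if_neg hx

theorem mul_lhopitalQuotient {x : 𝕜} (hzero : ψ x = 0 → φ x = 0) :
    ψ x * lhopitalQuotient φ ψ x = φ x := by
  by_cases hx : ψ x = 0
  · rw [hx, zero_mul, hzero hx]
  · rw [lhopitalQuotient_of_ne_zero hx, mul_div_cancel₀ _ hx]

theorem periodic_lhopitalQuotient {c : 𝕜} (hφ : Function.Periodic φ c)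
    (hψ : Function.Periodic ψ c) : Function.Periodic (lhopitalQuotient φ ψ) c := fun x ↦ by
  have hderiv {g : 𝕜 → 𝕜} (hg : Function.Periodic g c) : deriv g (x + c) = deriv g x := by
    rw [← deriv_comp_add_const, hg.funext]
  by_cases hx : ψ x = 0
  · simp only [lhopitalQuotient_of_eq_zero hx, lhopitalQuotient_of_eq_zero ((hψ x).trans hx),
      hderiv hφ, hderiv hψ]
  · simp only [lhopitalQuotient_of_ne_zero hx, lhopitalQuotient_of_ne_zero ((hψ x).trans_ne hx),
      hφ x, hψ x]

theorem continuous_lhopitalQuotient (hφ : Differentiable 𝕜 φ) (hψ : Differentiable 𝕜 ψ)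
    (hzero : ∀ x, ψ x = 0 → φ x = 0) (hsimple : ∀ x, ψ x = 0 → deriv ψ x ≠ 0) :
    Continuous (lhopitalQuotient φ ψ) := by
  refine continuous_iff_continuousAt.mpr fun x ↦ ?_
  by_cases hx : ψ x = 0
  · have hdslope : ContinuousAt (fun y ↦ dslope φ x y / dslope ψ x y) x :=
      (continuousAt_dslope_same.mpr (hφ x)).div (continuousAt_dslope_same.mpr (hψ x))
        (by simpa using hsimple x hx)
    have hne : ∀ᶠ y in 𝓝 x, y ≠ x → ψ y ≠ 0 :=
      eventually_nhdsWithin_iff.mp ((hψ x).hasDerivAt.eventually_ne (hsimple x hx))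
    refine hdslope.congr (hne.mono fun y hy ↦ ?_)
    obtain rfl | hyx := eq_or_ne y x
    · simp [lhopitalQuotient_of_eq_zero hx]
    · simp only [lhopitalQuotient_of_ne_zero (hy hyx), dslope_of_ne _ hyx, slope_def_field, hx,
        hzero x hx, sub_zero, div_div_div_cancel_right₀ (sub_ne_zero.mpr hyx)]
  · refine ((hφ x).continuousAt.div (hψ x).continuousAt hx).congr ?_
    filter_upwards [(hψ x).continuousAt.eventually_ne hx] with y hy
    exact (lhopitalQuotient_of_ne_zero hy).symm

theorem dense_setOf_ne_zero_of_deriv_ne_zero (hsimple : ∀ x, ψ x = 0 → deriv ψ x ≠ 0) :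
    Dense {x | ψ x ≠ 0} := fun x ↦ by
  by_cases hx : ψ x = 0
  · have hψ := (differentiableAt_of_deriv_ne_zero (hsimple x hx)).hasDerivAt
    exact mem_closure_iff_frequently.mpr
      ((hψ.eventually_ne (hsimple x hx)).frequently.filter_mono nhdsWithin_le_nhds)
  · exact subset_closure hx

end LHopitalQuotient

theorem exists_continuous_eq_mul_of_div_mem_Icc {φ ψ : ℝ → ℝ} {c m M : ℝ}
    (hφ : Differentiable ℝ φ) (hψ : Differentiable ℝ ψ)
    (hsimple : ∀ x, ψ x = 0 → deriv ψ x ≠ 0)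
    (hφc : Function.Periodic φ c) (hψc : Function.Periodic ψ c)
    (hbound : ∀ x, ψ x ≠ 0 → φ x / ψ x ∈ Set.Icc m M) :
    ∃ F : ℝ → ℝ, Continuous F ∧ (∀ x, F x ∈ Set.Icc m M) ∧ Function.Periodic F c ∧
      ∀ x, φ x = ψ x * F x := by
  have hdense := dense_setOf_ne_zero_of_deriv_ne_zero hsimple
  have hφ_le (x : ℝ) : |φ x| ≤ max |m| |M| * |ψ x| := by
    refine hdense.induction (P := fun x ↦ |φ x| ≤ max |m| |M| * |ψ x|) (fun y hy ↦ ?_)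
      (isClosed_le hφ.continuous.abs (hψ.continuous.abs.const_mul _)) x
    rw [← div_le_iff₀ (abs_pos.mpr hy), ← abs_div]
    exact abs_le_max_abs_abs (hbound y hy).1 (hbound y hy).2
  have hzero (x : ℝ) (hx : ψ x = 0) : φ x = 0 := by simpa [hx] using hφ_le x
  have hcont := continuous_lhopitalQuotient hφ hψ hzero hsimple
  refine ⟨lhopitalQuotient φ ψ, hcont, fun x ↦ ?_, periodic_lhopitalQuotient hφc hψc,
    fun x ↦ (mul_lhopitalQuotient (hzero x)).symm⟩
  refine hdense.induction (fun y hy ↦ ?_) (isClosed_Icc.preimage hcont) x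
  exact Set.mem_preimage.mpr (lhopitalQuotient_of_ne_zero hy ▸ hbound y hy)

open scoped Nat

theorem iteratedDerivWithin_polynomial_eval {𝕜 : Type*} [NontriviallyNormedField 𝕜]
    {s : Set 𝕜} (hs : UniqueDiffOn 𝕜 s) (p : Polynomial 𝕜) (n : ℕ) {x : 𝕜} (hx : x ∈ s) :
    iteratedDerivWithin n (fun y ↦ p.eval y) s x = (Polynomial.derivative^[n] p).eval x := by
  induction n generalizing p with
  | zero => simp
  | succ n ih =>
    rw [iteratedDerivWithin_succ',
      iteratedDerivWithin_congr (fun y hy ↦ p.derivWithin (hs y hy)) hx, ih,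
      Function.iterate_succ_apply]

theorem exists_iteratedDerivWithin_eq_zero {s : Set ℝ} (hs : s.OrdConnected)
    (hsd : UniqueDiffOn ℝ s) {n : ℕ} {f : ℝ → ℝ} (hf : ContDiffOn ℝ n f s)
    {x : Fin (n + 1) → ℝ} (hx : StrictMono x) (hxs : ∀ i, x i ∈ s) (hfx : ∀ i, f (x i) = 0) :
    ∃ η ∈ s, iteratedDerivWithin n f s η = 0 := by
  induction n generalizing f with
  | zero => exact ⟨x 0, hxs 0, by simpa using hfx 0⟩
  | succ n ih =>
    have hIcc (i : Fin (n + 1)) : Set.Icc (x i.castSucc) (x i.succ) ⊆ s :=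
      hs.out (hxs _) (hxs _)
    have hrolle (i : Fin (n + 1)) : ∃ y ∈ Set.Ioo (x i.castSucc) (x i.succ), deriv f y = 0 :=
      exists_deriv_eq_zero (hx i.castSucc_lt_succ) (hf.continuousOn.mono (hIcc i))
        ((hfx _).trans (hfx _).symm)
    choose y hy hfy using hrolle
    have hy_mono : StrictMono y := fun i j hij ↦
      calc y i < x i.succ := (hy i).2
        _ ≤ x j.castSucc := hx.monotone (Fin.succ_le_castSucc_iff.mpr hij)
        _ < y j := (hy j).1
    rw [iteratedDerivWithin_succ']
    refine ih (hf.derivWithin hsd (by norm_cast)) hy_mono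
      (fun i ↦ hIcc i (Set.Ioo_subset_Icc_self (hy i))) fun i ↦ ?_
    rw [derivWithin_of_mem_nhds (Filter.mem_of_superset (Icc_mem_nhds (hy i).1 (hy i).2) (hIcc i)),
      hfy]

theorem exists_sum_nodalWeight_mul_eq_iteratedDerivWithin {ι : Type*} [DecidableEq ι]
    {s : Set ℝ} (hs : s.OrdConnected) (hsd : UniqueDiffOn ℝ s) {n : ℕ} {f : ℝ → ℝ}
    (hf : ContDiffOn ℝ n f s) {t : Finset ι} (ht : #t = n + 1) {v : ι → ℝ}
    (hv : Set.InjOn v t) (hvs : ∀ i ∈ t, v i ∈ s) :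
    ∃ η ∈ s, n ! * ∑ i ∈ t, Lagrange.nodalWeight t v i * f (v i) =
      iteratedDerivWithin n f s η := by
  set p := Lagrange.interpolate t v (f ∘ v)
  have hp_node : ∀ i ∈ t, p.eval (v i) = f (v i) := fun i hi ↦
    Lagrange.eval_interpolate_at_node _ hv hi
  have hcard : #(t.image v) = n + 1 := by rw [card_image_of_injOn hv, ht]
  have hp : ContDiffOn ℝ n (fun x ↦ p.eval x) s := (p.contDiff_aeval n).contDiffOn
  have hnode (k : Fin (n + 1)) : ∃ i ∈ t, v i = (t.image v).orderEmbOfFin hcard k :=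
    mem_image.mp (orderEmbOfFin_mem _ hcard k)
  obtain ⟨η, hη, hzero⟩ := exists_iteratedDerivWithin_eq_zero hs hsd (hf.sub hp)
    ((t.image v).orderEmbOfFin hcard).strictMono
    (fun k ↦ by obtain ⟨i, hi, hik⟩ := hnode k; exact hik ▸ hvs i hi)
    (fun k ↦ by obtain ⟨i, hi, hik⟩ := hnode k; simp [← hik, hp_node i hi])
  have hp_deriv : (Polynomial.derivative^[n] p).eval η =
      n ! * ∑ i ∈ t, Lagrange.nodalWeight t v i * f (v i) := by
    rw [Lagrange.eval_iterate_derivative_eq_sum hv (Lagrange.degree_interpolate_lt _ hv)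
      (by omega), ht]
    congr 1
    refine sum_congr rfl fun i hi ↦ ?_
    rw [hp_node i hi]
    simp [Lagrange.nodalWeight, div_eq_inv_mul, prod_inv_distrib]
  refine ⟨η, hη, ?_⟩
  rw [← hp_deriv, ← iteratedDerivWithin_polynomial_eval hsd p n hη, eq_comm, ← sub_eq_zero,
    ← iteratedDerivWithin_sub hη hsd (hf η hη) (hp η hη)]
  exact hzero

section ChebyshevNodes

open Polynomial

variable {ι : Type*} {t : Finset ι} {θ : ι → ℝ} {c : ℝ}

theorem smul_nodal_cos_eq_chebyshevT_sub_C (ht : t.Nonempty)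
    (hθ : Set.InjOn (fun i ↦ cos (θ i)) t) (hc : ∀ i ∈ t, cos (#t * θ i) = c) :
    (2 ^ (#t - 1) : ℝ) • Lagrange.nodal t (fun i ↦ cos (θ i)) = Chebyshev.T ℝ #t - C c := by
  have hdegC : (C c).degree < (Chebyshev.T ℝ #t).degree := by
    rw [Chebyshev.degree_T]
    exact degree_C_le.trans_lt (by simpa using ht)
  have hreg : IsSMulRegular ℝ (2 ^ (#t - 1) : ℝ) := (IsRegular.of_ne_zero (by positivity)).left
  have hdeg : ((2 ^ (#t - 1) : ℝ) • Lagrange.nodal t fun i ↦ cos (θ i)).degree = #t := by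
    rw [degree_smul_of_smul_regular _ hreg, Lagrange.degree_nodal]
  refine eq_of_degree_le_of_eval_index_eq t hθ hdeg.le ?_ ?_ fun i hi ↦ ?_
  · rw [hdeg, degree_sub_eq_left_of_degree_lt hdegC, Chebyshev.degree_T, Int.natAbs_natCast]
  · rw [leadingCoeff_sub_of_degree_lt hdegC, Chebyshev.leadingCoeff_T, Int.natAbs_natCast,
      leadingCoeff_smul_of_smul_regular _ hreg, Lagrange.nodal_monic.leadingCoeff, smul_eq_mul,
      mul_one]
  · rw [eval_smul, Lagrange.eval_nodal_at_node (v := fun i ↦ cos (θ i)) hi]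
    simp [Chebyshev.T_real_cos, hc i hi]

variable [DecidableEq ι]

theorem card_mul_sin_mul_nodalWeight_cos (hθ : Set.InjOn (fun i ↦ cos (θ i)) t)
    (hc : ∀ i ∈ t, cos (#t * θ i) = c) {i : ι} (hi : i ∈ t) :
    #t * sin (#t * θ i) * Lagrange.nodalWeight t (fun i ↦ cos (θ i)) i =
      2 ^ (#t - 1) * sin (θ i) := by
  set nodalDeriv := (derivative (Lagrange.nodal t (fun i ↦ cos (θ i)))).eval (cos (θ i))
  have hweight : Lagrange.nodalWeight t (fun i ↦ cos (θ i)) i = nodalDeriv⁻¹ :=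
    Lagrange.nodalWeight_eq_eval_derivative_nodal hi
  have hnodalDeriv : nodalDeriv ≠ 0 := by
    simpa [hweight] using Lagrange.nodalWeight_ne_zero hθ hi
  have hderiv : 2 ^ (#t - 1) * nodalDeriv =
      #t * (Chebyshev.U ℝ (#t - 1)).eval (cos (θ i)) := by
    simpa [Chebyshev.T_derivative_eq_U] using
      congr((derivative $(smul_nodal_cos_eq_chebyshevT_sub_C ⟨i, hi⟩ hθ hc)).eval (cos (θ i)))
  have hU : (Chebyshev.U ℝ (#t - 1)).eval (cos (θ i)) * sin (θ i) = sin (#t * θ i) := by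
    simp [Chebyshev.U_real_cos]
  rw [hweight, ← hU]
  field_simp
  linear_combination -hderiv * sin (θ i)

end ChebyshevNodes

/-- The symmetrization of `g` under the rotations by multiples of `2π/N`: the sum of `g` over the
`N` angles `ξ - 2πn/N`. -/
noncomputable def rotationSum (N : ℕ) (g : ℝ → ℝ) (ξ : ℝ) : ℝ :=
  ∑ n ∈ range N, g (ξ - 2 * π * n / N)

theorem periodic_rotationSum (N : ℕ) {g : ℝ → ℝ} (hg : Function.Periodic g (2 * π)) :
    Function.Periodic (rotationSum N g) (2 * π / N) := fun ξ ↦ by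
  obtain _ | M := N
  · simp
  · have hshift (n : ℕ) : ξ + 2 * π / (M + 1 : ℕ) - 2 * π * (n + 1 : ℕ) / (M + 1 : ℕ) =
        ξ - 2 * π * n / (M + 1 : ℕ) := by
      push_cast; ring
    have hlast : ξ + 2 * π / (M + 1 : ℕ) - 2 * π * (0 : ℕ) / (M + 1 : ℕ) =
        ξ - 2 * π * M / (M + 1 : ℕ) + 2 * π := by
      push_cast; field_simp; ring
    rw [rotationSum, rotationSum, sum_range_succ', sum_range_succ, hlast, hg]
    simp only [hshift]

theorem differentiable_rotationSum (N : ℕ) {g : ℝ → ℝ} (hg : Differentiable ℝ g) :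
    Differentiable ℝ (rotationSum N g) := by
  unfold rotationSum
  fun_prop

theorem injOn_cos_sub_two_pi_mul_div {N : ℕ} {ξ : ℝ} (hξ : sin (N * ξ) ≠ 0) :
    Set.InjOn (fun n : ℕ ↦ cos (ξ - 2 * π * n / N)) (range N) := by
  intro n hn m hm hnm
  have hN : (N : ℝ) ≠ 0 := by
    intro h
    simp [h] at hξ
  obtain ⟨k, hk | hk⟩ := cos_eq_cos_iff.mp hnm <;> field_simp at hk
  · have hdvd : (m : ℤ) - n = N * -k := by
      have : (m : ℝ) - n = N * -k :=
        mul_left_cancel₀ (mul_pos two_pos pi_pos).ne' (by linear_combination -hk)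
      exact_mod_cast this
    exact (Nat.modEq_iff_dvd.mpr ⟨_, hdvd⟩).eq_of_lt_of_lt (mem_range.mp hn) (mem_range.mp hm)
  · refine absurd (sin_eq_zero_iff.mpr ⟨k * N + n + m, ?_⟩) hξ
    push_cast
    linear_combination -hk / 2

theorem exists_rotationSum_div_sin_eq_iteratedDerivWithin {N : ℕ} {ξ : ℝ}
    (hξ : sin (N * ξ) ≠ 0) {f : ℝ → ℝ} (hf : ContDiffOn ℝ (N - 1 : ℕ) f (Set.Icc (-1) 1)) :
    ∃ η ∈ Set.Icc (-1) 1, rotationSum N (fun θ ↦ sin θ * f (cos θ)) ξ / sin (N * ξ) =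
      N / (2 ^ (N - 1) * (N - 1)!) * iteratedDerivWithin (N - 1) f (Set.Icc (-1) 1) η := by
  have hN : N ≠ 0 := by
    rintro rfl
    simp at hξ
  set θ : ℕ → ℝ := fun n ↦ ξ - 2 * π * n / N with hθ
  have hNθ (n : ℕ) : N * θ n = N * ξ - n * (2 * π) := by
    simp only [hθ]
    field_simp
  have hinj : Set.InjOn (fun n ↦ cos (θ n)) (range N) := injOn_cos_sub_two_pi_mul_div hξ
  obtain ⟨η, hη, hmean⟩ := exists_sum_nodalWeight_mul_eq_iteratedDerivWithin Set.ordConnected_Icc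
    (uniqueDiffOn_Icc (by norm_num)) hf (t := range N) (by rw [card_range]; omega) hinj
    fun n _ ↦ cos_mem_Icc (θ n)
  refine ⟨η, hη, ?_⟩
  have hweight : ∀ n ∈ range N, sin (θ n) = N * sin (N * ξ) / 2 ^ (N - 1) *
      Lagrange.nodalWeight (range N) (fun n ↦ cos (θ n)) n := fun n hn ↦ by
    have h := card_mul_sin_mul_nodalWeight_cos hinj (c := cos (N * ξ))
      (fun m _ ↦ by rw [card_range, hNθ, cos_sub_nat_mul_two_pi]) hn
    rw [card_range, hNθ, sin_sub_nat_mul_two_pi] at h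
    field_simp
    linear_combination -h
  have hsum : rotationSum N (fun x ↦ sin x * f (cos x)) ξ =
      N * sin (N * ξ) / 2 ^ (N - 1) *
        ∑ n ∈ range N, Lagrange.nodalWeight (range N) (fun n ↦ cos (θ n)) n * f (cos (θ n)) := by
    rw [mul_sum]
    exact sum_congr rfl fun n hn ↦ by rw [← mul_assoc, ← hweight n hn]
  rw [hsum, ← hmean]
  field_simp

theorem exists_pos_forall_rotationSum_div_sin_mem_Icc {N : ℕ} (hN : 0 < N) {f : ℝ → ℝ}
    (hf : ContDiffOn ℝ (N - 1 : ℕ) f (Set.Icc (-1) 1))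
    (hpos : ∀ x ∈ Set.Icc (-1) 1, 0 < iteratedDerivWithin (N - 1) f (Set.Icc (-1) 1) x) :
    ∃ m M, 0 < m ∧ ∀ ξ, sin (N * ξ) ≠ 0 →
      rotationSum N (fun θ ↦ sin θ * f (cos θ)) ξ / sin (N * ξ) ∈ Set.Icc m M := by
  set g := iteratedDerivWithin (N - 1) f (Set.Icc (-1) 1)
  have hg : ContinuousOn g (Set.Icc (-1) 1) :=
    hf.continuousOn_iteratedDerivWithin le_rfl (uniqueDiffOn_Icc (by norm_num))
  have hne : (Set.Icc (-1 : ℝ) 1).Nonempty := Set.nonempty_Icc.mpr (by norm_num)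
  obtain ⟨a, ha, hmin⟩ := isCompact_Icc.exists_isMinOn hne hg
  obtain ⟨b, -, hmax⟩ := isCompact_Icc.exists_isMaxOn hne hg
  set κ : ℝ := N / (2 ^ (N - 1) * (N - 1)!)
  have hκ : 0 < κ := by positivity
  refine ⟨κ * g a, κ * g b, mul_pos hκ (hpos a ha), fun ξ hξ ↦ ?_⟩
  obtain ⟨η, hη, hquot⟩ := exists_rotationSum_div_sin_eq_iteratedDerivWithin hξ hf
  rw [hquot]
  exact ⟨mul_le_mul_of_nonneg_left (hmin hη) hκ.le, mul_le_mul_of_nonneg_left (hmax hη) hκ.le⟩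

theorem deriv_sin_const_mul_ne_zero {c ξ : ℝ} (hc : c ≠ 0) (hξ : sin (c * ξ) = 0) :
    deriv (fun x ↦ sin (c * x)) ξ ≠ 0 := by
  have hcos : cos (c * ξ) ≠ 0 := fun h ↦ by simpa [hξ, h] using sin_sq_add_cos_sq (c * ξ)
  have hderiv : HasDerivAt (fun x ↦ sin (c * x)) (cos (c * ξ) * c) ξ := by
    simpa using ((hasDerivAt_id ξ).const_mul c).sin
  rw [hderiv.deriv]
  exact mul_ne_zero hcos hc

theorem exists_pos_continuous_rotationSum_eq_sin_mul {N : ℕ} (hN : 0 < N) {f : ℝ → ℝ}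
    (hf : ContDiffOn ℝ N f (Set.Icc (-1) 1))
    (hpos : ∀ x ∈ Set.Icc (-1) 1, 0 < iteratedDerivWithin (N - 1) f (Set.Icc (-1) 1) x) :
    ∃ F : ℝ → ℝ, Continuous F ∧ (∀ ξ, 0 < F ξ) ∧ Function.Periodic F (2 * π / N) ∧
      ∀ ξ, rotationSum N (fun θ ↦ sin θ * f (cos θ)) ξ = sin (N * ξ) * F ξ := by
  obtain ⟨m, M, hm, hbound⟩ := exists_pos_forall_rotationSum_div_sin_mem_Icc hN
    (hf.of_le (by norm_cast; omega)) hpos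
  have hfcos : Differentiable ℝ fun θ ↦ f (cos θ) := differentiableOn_univ.mp <|
    (hf.differentiableOn (by norm_cast; omega)).comp differentiable_cos.differentiableOn
      fun θ _ ↦ cos_mem_Icc θ
  have hperiodic : Function.Periodic (fun θ ↦ sin θ * f (cos θ)) (2 * π) := fun θ ↦ by
    simp only [sin_add_two_pi, cos_add_two_pi]
  have hsin_periodic : Function.Periodic (fun x ↦ sin (N * x)) (2 * π / N) := by
    simpa only [div_eq_inv_mul] using sin_periodic.const_mul (N : ℝ)
  obtain ⟨F, hF, hF_mem, hF_periodic, hF_eq⟩ := exists_continuous_eq_mul_of_div_mem_Icc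
    (differentiable_rotationSum N (differentiable_sin.mul hfcos)) (by fun_prop)
    (fun ξ ↦ deriv_sin_const_mul_ne_zero (Nat.cast_ne_zero.mpr hN.ne'))
    (periodic_rotationSum N hperiodic) hsin_periodic hbound
  exact ⟨F, hF, fun ξ ↦ hm.trans_le (hF_mem ξ).1, hF_periodic, hF_eq⟩

theorem iteratedDerivWithin_one_sub_mul_rpow {s : Set ℝ} (hs : UniqueDiffOn ℝ s) {ρ : ℝ}
    (hρ : ∀ x ∈ s, 1 - ρ * x ≠ 0) (r : ℝ) (n : ℕ) {x : ℝ} (hx : x ∈ s) :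
    iteratedDerivWithin n (fun y ↦ (1 - ρ * y) ^ r) s x =
      (ascPochhammer ℝ n).eval (-r) * ρ ^ n * (1 - ρ * x) ^ (r - n) := by
  induction n generalizing x with
  | zero => simp
  | succ n ih =>
    have hlin : HasDerivAt (fun y ↦ 1 - ρ * y) (-ρ) x := by
      simpa using ((hasDerivAt_id x).const_mul ρ).const_sub 1
    have hpow := (hlin.rpow_const (p := r - n) (.inl (hρ x hx))).const_mul
      ((ascPochhammer ℝ n).eval (-r) * ρ ^ n)
    rw [iteratedDerivWithin_succ, derivWithin_congr (fun y hy ↦ ih hy) (ih hx),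
      hpow.hasDerivWithinAt.derivWithin (hs x hx), ascPochhammer_succ_eval,
      pow_succ, Nat.cast_succ, ← sub_sub]
    ring

theorem kernel_factorization_general (N : ℕ) (hN : 0 < N) (s ρ : ℝ)
    (hs : s < 2) (hρ0 : 0 < ρ) (hρ1 : ρ < 1) :
    ∃ F : ℝ → ℝ, Continuous F ∧ (∀ ξ, 0 < F ξ) ∧
      (∀ ξ, F (ξ + 2 * π / N) = F ξ) ∧
      ∀ ξ : ℝ,
        (∑ n ∈ Finset.range N,
          Real.sin (ξ - 2 * π * n / N) *
            (1 - ρ * Real.cos (ξ - 2 * π * n / N)) ^ (-(2 - s))) =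
        Real.sin (N * ξ) * F ξ := by
  have hbase : ∀ x ∈ Set.Icc (-1 : ℝ) 1, 0 < 1 - ρ * x := fun x hx ↦ by nlinarith [hx.2]
  have hbase_ne : ∀ x ∈ Set.Icc (-1 : ℝ) 1, 1 - ρ * x ≠ 0 := fun x hx ↦ (hbase x hx).ne'
  refine exists_pos_continuous_rotationSum_eq_sin_mul hN
    (f := fun x ↦ (1 - ρ * x) ^ (-(2 - s))) ?_ fun x hx ↦ ?_
  · exact ContDiffOn.rpow_const_of_ne (by fun_prop) hbase_ne
  · rw [iteratedDerivWithin_one_sub_mul_rpow (uniqueDiffOn_Icc (by norm_num)) hbase_ne _ _ hx,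
      neg_neg]
    have hpoch := ascPochhammer_pos (N - 1) (2 - s) (sub_pos.mpr hs)
    have hpow := rpow_pos_of_pos (hbase x hx) (-(2 - s) - (N - 1 : ℕ))
    positivity

theorem kernel_factorization (N : ℕ) (hN : 2 ≤ N) (s ρ : ℝ)
    (hs0 : 0 ≤ s) (hs1 : s ≤ 1) (hρ0 : 0 < ρ) (hρ1 : ρ < 1) :
    ∃ F : ℝ → ℝ, Continuous F ∧ (∀ ξ, 0 < F ξ) ∧
      (∀ ξ, F (ξ + 2 * π / N) = F ξ) ∧
      ∀ ξ : ℝ,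
        (∑ n ∈ Finset.range N,
          Real.sin (ξ - 2 * π * n / N) *
            (1 - ρ * Real.cos (ξ - 2 * π * n / N)) ^ (-(2 - s))) =
        Real.sin (N * ξ) * F ξ :=
  kernel_factorization_general N (by omega) s ρ (by linarith) hρ0 hρ1
end
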